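/- Let Γ be a connected simple graph. For every signature σ of Γ, the largest eigenvalue of the Laplacian matrix satisfies λ_max(L(−Γ)) ≥ λ_max(L(Γ, σ)), with equality if and only if (Γ, σ) is antibalanced. -/

import Mathlib

/-- The sign of a walk in a signed graph: the product of the signs of its edges. -/
def walkSign {V : Type*} (G : SimpleGraph V) (σ : Sym2 V → ℤˣ) {u v : V}
    (w : G.Walk u v) : ℤˣ :=
  (w.edges.map σ).prod

/-- A signed graph is balanced if every circle (cycle) is positive. -/
def sgBalanced {V : Type*} (G : SimpleGraph V) (σ : Sym2 V → ℤˣ) : Prop :=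
  ∀ ⦃v : V⦄ (w : G.Walk v v), w.IsCycle → walkSign G σ w = 1

/-- A signed graph is antibalanced if its negative (negating every sign) is balanced. -/
def sgAntibalanced {V : Type*} (G : SimpleGraph V) (σ : Sym2 V → ℤˣ) : Prop :=
  sgBalanced G (fun e => -σ e)

/-- The adjacency matrix of a signed graph: entry `(i, j)` is the sign of the edge `ij`
if it exists, and `0` otherwise. -/
def sgAdjMatrix {V : Type*} [Fintype V] (G : SimpleGraph V) [DecidableRel G.Adj]
    (σ : Sym2 V → ℤˣ) : Matrix V V ℝ :=
  Matrix.of fun i j => if G.Adj i j then ((σ s(i, j) : ℤ) : ℝ) else 0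

/-- The Laplacian matrix `L(Σ) = D(Γ) - A(Σ)` of a signed graph. -/
def sgLapMatrix {V : Type*} [Fintype V] [DecidableEq V] (G : SimpleGraph V)
    [DecidableRel G.Adj] (σ : Sym2 V → ℤˣ) : Matrix V V ℝ :=
  Matrix.diagonal (fun v => (G.degree v : ℝ)) - sgAdjMatrix G σ

/-- The largest eigenvalue of a real matrix, as the supremum of its spectrum. -/
noncomputable def maxEigenvalue {V : Type*} [Fintype V] [DecidableEq V]
    (M : Matrix V V ℝ) : ℝ :=
  sSup (spectrum ℝ M)

section Helpers
open Matrix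

theorem walkSign_path_edge {V : Type*} (G : SimpleGraph V) (σ : Sym2 V → ℤˣ) {u v : V}
    (p : G.Walk v u) (hp : p.IsPath) (he : s(u, v) ∈ p.edges) :
    walkSign G σ p = σ s(u, v) := by
  cases p with
  | nil => simp at he
  | cons h q =>
    rename_i w
    rw [SimpleGraph.Walk.cons_isPath_iff] at hp
    rw [SimpleGraph.Walk.edges_cons, List.mem_cons] at he
    rcases he with he | he
    · have hw : w = u := by
        have := h.ne
        rw [Sym2.eq_iff] at he
        rcases he with ⟨h1, h2⟩ | ⟨h1, h2⟩
        · exact absurd h2 this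
        · exact h1.symm
      subst hw
      have hq := SimpleGraph.Walk.isPath_iff_eq_nil.1 hp.1
      subst hq
      simp [walkSign, Sym2.eq_swap]
    · exact absurd (SimpleGraph.Walk.snd_mem_support_of_mem_edges q he) hp.2

theorem walkSign_append {V : Type*} (G : SimpleGraph V) (σ : Sym2 V → ℤˣ) {u v w : V}
    (p : G.Walk u v) (q : G.Walk v w) :
    walkSign G σ (p.append q) = walkSign G σ p * walkSign G σ q := by
  simp [walkSign]

theorem walkSign_cons {V : Type*} (G : SimpleGraph V) (σ : Sym2 V → ℤˣ) {u v w : V}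
    (h : G.Adj u v) (q : G.Walk v w) :
    walkSign G σ (SimpleGraph.Walk.cons h q) = σ s(u, v) * walkSign G σ q := by
  simp [walkSign]

theorem walkSign_reverse {V : Type*} (G : SimpleGraph V) (σ : Sym2 V → ℤˣ) {u v : V}
    (p : G.Walk u v) : walkSign G σ p.reverse = walkSign G σ p := by
  simp [walkSign, List.prod_reverse]

theorem walkSign_bypass {V : Type*} [DecidableEq V] (G : SimpleGraph V) (σ : Sym2 V → ℤˣ)
    (hb : sgBalanced G σ) {u v : V} (p : G.Walk u v) :
    walkSign G σ p.bypass = walkSign G σ p := by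
  induction p with
  | nil => rfl
  | cons h p ih =>
    rename_i a b c
    rw [walkSign_cons, ← ih]
    have hpath := SimpleGraph.Walk.bypass_isPath p
    simp only [SimpleGraph.Walk.bypass]
    split_ifs with hs
    · have hsplit : walkSign G σ p.bypass =
          walkSign G σ (p.bypass.takeUntil a hs) * walkSign G σ (p.bypass.dropUntil a hs) := by
        rw [← walkSign_append, SimpleGraph.Walk.take_spec]
      have key : σ s(a, b) * walkSign G σ (p.bypass.takeUntil a hs) = 1 := by
        have ht : (p.bypass.takeUntil a hs).IsPath := hpath.takeUntil hs
        by_cases he : s(a, b) ∈ (p.bypass.takeUntil a hs).edges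
        · rw [walkSign_path_edge G σ _ ht he, Int.units_mul_self]
        · rw [← walkSign_cons G σ h]
          exact hb _ ((SimpleGraph.Walk.cons_isCycle_iff _ h).2 ⟨ht, he⟩)
      rw [hsplit, ← mul_assoc, key, one_mul]
    · rw [walkSign_cons]

theorem walkSign_closed {V : Type*} [DecidableEq V] (G : SimpleGraph V) (σ : Sym2 V → ℤˣ)
    (hb : sgBalanced G σ) {u : V} (p : G.Walk u u) : walkSign G σ p = 1 := by
  rw [← walkSign_bypass G σ hb p,
    SimpleGraph.Walk.isPath_iff_eq_nil.1 (SimpleGraph.Walk.bypass_isPath p)]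
  simp [walkSign]

theorem balanced_switch {V : Type*} [DecidableEq V] (G : SimpleGraph V) (σ : Sym2 V → ℤˣ)
    (hconn : G.Connected) (hb : sgBalanced G σ) :
    ∃ s : V → ℤˣ, ∀ u v, G.Adj u v → σ s(u, v) = s u * s v := by
  obtain ⟨r⟩ := hconn.nonempty
  have hw : ∀ v, Nonempty (G.Walk r v) := fun v => hconn.preconnected r v
  let W : ∀ v, G.Walk r v := fun v => (hw v).some
  refine ⟨fun v => walkSign G σ (W v), fun u v h => ?_⟩
  have := walkSign_closed G σ hb ((W u).append (SimpleGraph.Walk.cons h (W v).reverse))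
  rw [walkSign_append, walkSign_cons, walkSign_reverse] at this
  show σ s(u, v) = walkSign G σ (W u) * walkSign G σ (W v)
  generalize walkSign G σ (W u) = a at *
  generalize walkSign G σ (W v) = b at *
  generalize σ s(u, v) = c at *
  rcases Int.units_eq_one_or a with rfl | rfl <;> rcases Int.units_eq_one_or b with rfl | rfl <;>
    rcases Int.units_eq_one_or c with rfl | rfl <;> simp_all

theorem switch_balanced {V : Type*} (G : SimpleGraph V) (σ : Sym2 V → ℤˣ)
    (s : V → ℤˣ) (hs : ∀ u v, G.Adj u v → σ s(u, v) = s u * s v) : sgBalanced G σ := by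
  have key : ∀ {u v : V} (p : G.Walk u v), walkSign G σ p = s u * s v := by
    intro u v p
    induction p with
    | nil => simp [walkSign, Int.units_mul_self]
    | cons h p ih =>
      rename_i a b c
      rw [walkSign_cons, ih, hs _ _ h, mul_assoc, ← mul_assoc (s b), Int.units_mul_self, one_mul]
  intro v w _
  rw [key, Int.units_mul_self]

section Rayleigh
variable {V : Type*} [Fintype V] [DecidableEq V]

theorem maxEig_mem [Nonempty V] (M : Matrix V V ℝ) (hM : M.IsHermitian) :
    maxEigenvalue M ∈ spectrum ℝ M ∧ ∀ c ∈ spectrum ℝ M, c ≤ maxEigenvalue M := by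
  have h := hM.spectrum_real_eq_range_eigenvalues
  have hf : (spectrum ℝ M).Finite := by rw [h]; exact Set.finite_range _
  have hn : (spectrum ℝ M).Nonempty := by rw [h]; exact Set.range_nonempty _
  exact ⟨hn.csSup_mem hf, fun c hc => le_csSup hf.bddAbove hc⟩

theorem maxEig_exists [Nonempty V] (M : Matrix V V ℝ) (hM : M.IsHermitian) :
    ∃ x : V → ℝ, x ≠ 0 ∧ M *ᵥ x = maxEigenvalue M • x := by
  have h := (maxEig_mem M hM).1
  rw [← Matrix.spectrum_toLin', ← Module.End.hasEigenvalue_iff_mem_spectrum] at h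
  obtain ⟨x, hx⟩ := h.exists_hasEigenvector
  exact ⟨x, hx.2, by simpa using hx.apply_eq_smul⟩

theorem maxEig_psd [Nonempty V] (M : Matrix V V ℝ) (hM : M.IsHermitian) :
    (maxEigenvalue M • (1 : Matrix V V ℝ) - M).PosSemidef := by
  rw [Matrix.posSemidef_iff_isHermitian_and_spectrum_nonneg]
  constructor
  · refine Matrix.IsHermitian.sub ?_ hM
    simp [Matrix.IsHermitian]
  · intro c hc
    rw [← Algebra.algebraMap_eq_smul_one, ← spectrum.singleton_sub_eq] at hc
    obtain ⟨a, rfl, b, hb, rfl⟩ := hc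
    have := (maxEig_mem M hM).2 b hb
    simpa using this

theorem psd_form (M : Matrix V V ℝ) (c : ℝ) (x : V → ℝ) :
    x ⬝ᵥ ((c • (1 : Matrix V V ℝ) - M) *ᵥ x) = c * (x ⬝ᵥ x) - x ⬝ᵥ (M *ᵥ x) := by
  rw [Matrix.sub_mulVec, dotProduct_sub, Matrix.smul_mulVec, Matrix.one_mulVec, dotProduct_smul,
    smul_eq_mul]

theorem maxEig_ge [Nonempty V] (M : Matrix V V ℝ) (hM : M.IsHermitian) (x : V → ℝ) :
    x ⬝ᵥ (M *ᵥ x) ≤ maxEigenvalue M * (x ⬝ᵥ x) := by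
  have h := (maxEig_psd M hM).dotProduct_mulVec_nonneg x
  rw [star_trivial, psd_form] at h
  linarith

theorem maxEig_eq [Nonempty V] (M : Matrix V V ℝ) (hM : M.IsHermitian) (x : V → ℝ)
    (hx : x ⬝ᵥ (M *ᵥ x) = maxEigenvalue M * (x ⬝ᵥ x)) : M *ᵥ x = maxEigenvalue M • x := by
  have h := (maxEig_psd M hM).dotProduct_mulVec_zero_iff x
  rw [star_trivial, psd_form, hx, sub_self] at h
  have := h.1 rfl
  rw [Matrix.sub_mulVec, Matrix.smul_mulVec, Matrix.one_mulVec, sub_eq_zero] at this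
  exact this.symm

variable (G : SimpleGraph V) [DecidableRel G.Adj]

theorem sgLap_herm (σ : Sym2 V → ℤˣ) : (sgLapMatrix G σ).IsHermitian := by
  refine Matrix.IsHermitian.sub (Matrix.isHermitian_diagonal _) ?_
  ext i j
  simp [sgAdjMatrix, G.adj_comm i j, Sym2.eq_swap (a := i) (b := j)]

theorem sgLap_diag (σ : Sym2 V → ℤˣ) (i : V) : sgLapMatrix G σ i i = G.degree i := by
  simp [sgLapMatrix, sgAdjMatrix]

theorem sgLap_adj (σ : Sym2 V → ℤˣ) {i j : V} (h : G.Adj i j) :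
    sgLapMatrix G σ i j = -((σ s(i, j) : ℤ) : ℝ) := by
  simp [sgLapMatrix, sgAdjMatrix, h, h.ne]

theorem sgLap_non (σ : Sym2 V → ℤˣ) {i j : V} (hn : i ≠ j) (h : ¬ G.Adj i j) :
    sgLapMatrix G σ i j = 0 := by
  simp [sgLapMatrix, sgAdjMatrix, h, hn]

theorem form_eq (M : Matrix V V ℝ) (x : V → ℝ) :
    x ⬝ᵥ (M *ᵥ x) = ∑ i, ∑ j, x i * (M i j * x j) := by
  simp [dotProduct, Matrix.mulVec, Finset.mul_sum]

theorem term_le (σ : Sym2 V → ℤˣ) (x : V → ℝ) (i j : V) :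
    x i * (sgLapMatrix G σ i j * x j) ≤
      |x i| * (sgLapMatrix G (fun _ => -1) i j * |x j|) := by
  by_cases hij : i = j
  · subst hij
    rw [sgLap_diag, sgLap_diag]
    have := abs_mul_abs_self (x i)
    apply le_of_eq
    linear_combination -(G.degree i : ℝ) * this
  by_cases h : G.Adj i j
  · rw [sgLap_adj G _ h, sgLap_adj G _ h]
    have h1 := le_abs_self (x i * x j)
    have h2 := neg_abs_le (x i * x j)
    rw [abs_mul] at h1 h2
    rcases Int.units_eq_one_or (σ s(i, j)) with h | h <;> rw [h] <;> push_cast <;> linarith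
  · rw [sgLap_non G _ hij h, sgLap_non G _ hij h]; simp

theorem abs_dot (x : V → ℝ) : (fun i => |x i|) ⬝ᵥ (fun i => |x i|) = x ⬝ᵥ x := by
  simp [dotProduct]

theorem dot_pos (x : V → ℝ) (hx : x ≠ 0) : 0 < x ⬝ᵥ x := by
  have := Matrix.dotProduct_star_self_pos_iff.2 hx
  simpa using this

theorem pos_of_eig (hconn : G.Connected) (y : V → ℝ) (hy : y ≠ 0) (h0 : ∀ i, 0 ≤ y i) (c : ℝ)
    (he : sgLapMatrix G (fun _ => -1) *ᵥ y = c • y) : ∀ i, 0 < y i := by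
  have step : ∀ i j, G.Adj i j → y i = 0 → y j = 0 := by
    intro i j hij hi
    have h1 := congrFun he i
    simp only [Matrix.mulVec, dotProduct, Pi.smul_apply, hi, smul_zero] at h1
    have hnn : ∀ k ∈ Finset.univ, 0 ≤ sgLapMatrix G (fun _ => -1) i k * y k := by
      intro k _
      refine mul_nonneg ?_ (h0 k)
      by_cases hk : i = k
      · subst hk; rw [sgLap_diag]; positivity
      by_cases h : G.Adj i k
      · rw [sgLap_adj G _ h]; simp
      · rw [sgLap_non G _ hk h]
    have := (Finset.sum_eq_zero_iff_of_nonneg hnn).1 h1 j (Finset.mem_univ _)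
    rw [sgLap_adj G _ hij] at this
    simpa using this
  intro i
  refine lt_of_le_of_ne (h0 i) fun hi => hy ?_
  funext j
  obtain ⟨p⟩ := hconn.preconnected i j
  have : ∀ {a b : V} (p : G.Walk a b), y a = 0 → y b = 0 := by
    intro a b p
    induction p with
    | nil => exact id
    | cons h p ih => exact fun ha => ih (step _ _ h ha)
  exact this p hi.symm

end Rayleigh
end Helpers

/-- For a connected graph `Γ` and any signature `σ`, the largest Laplacian eigenvalue of
the all-negative signed graph `-Γ` is at least that of `(Γ, σ)`, with equality iff
`(Γ, σ)` is antibalanced. -/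
theorem lapMax_allNegative_ge {V : Type*} [Fintype V] [DecidableEq V]
    (G : SimpleGraph V) [DecidableRel G.Adj] (σ : Sym2 V → ℤˣ)
    (hconn : G.Connected) :
    maxEigenvalue (sgLapMatrix G (fun _ => -1)) ≥ maxEigenvalue (sgLapMatrix G σ) ∧
    (maxEigenvalue (sgLapMatrix G (fun _ => -1)) = maxEigenvalue (sgLapMatrix G σ) ↔
      sgAntibalanced G σ) := by
  haveI : Nonempty V := hconn.nonempty
  set L := sgLapMatrix G σ with hL
  set Q := sgLapMatrix G (fun _ => -1) with hQ
  have hLh : L.IsHermitian := sgLap_herm G σ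
  have hQh : Q.IsHermitian := sgLap_herm G _
  obtain ⟨x, hx0, hx⟩ := maxEig_exists L hLh
  have hxx := dot_pos x hx0
  have hxL : x ⬝ᵥ (L.mulVec x) = maxEigenvalue L * (x ⬝ᵥ x) := by
    rw [hx, dotProduct_smul, smul_eq_mul]
  set y : V → ℝ := fun i => |x i| with hy
  have hyy : y ⬝ᵥ y = x ⬝ᵥ x := abs_dot x
  have hyQ := maxEig_ge Q hQh y
  have hterm : ∀ i j, x i * (L i j * x j) ≤ y i * (Q i j * y j) := term_le G σ x
  have hle : x ⬝ᵥ (L.mulVec x) ≤ y ⬝ᵥ (Q.mulVec y) := by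
    rw [form_eq, form_eq]
    exact Finset.sum_le_sum fun i _ => Finset.sum_le_sum fun j _ => hterm i j
  have hge : maxEigenvalue L ≤ maxEigenvalue Q := by
    rw [hyy] at hyQ
    exact le_of_mul_le_mul_right (by linarith) hxx
  refine ⟨hge, fun heq => ?_, fun hab => ?_⟩
  · have hQe : y ⬝ᵥ (Q.mulVec y) = maxEigenvalue Q * (y ⬝ᵥ y) := by
      apply le_antisymm hyQ
      rw [heq, hyy]; linarith
    have hye := maxEig_eq Q hQh y hQe
    have hy0 : y ≠ 0 := by
      intro h
      rw [← hyy, h] at hxx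
      simp at hxx
    have hpos := pos_of_eig G hconn y hy0 (fun i => abs_nonneg _) _ hye
    have hsum : x ⬝ᵥ (L.mulVec x) = y ⬝ᵥ (Q.mulVec y) := by
      rw [hQe, hxL, heq, hyy]
    rw [form_eq, form_eq] at hsum
    have h1 := (Finset.sum_eq_sum_iff_of_le
      (fun i _ => Finset.sum_le_sum fun j _ => hterm i j)).1 hsum
    have h2 : ∀ i j, x i * (L i j * x j) = y i * (Q i j * y j) := fun i j =>
      (Finset.sum_eq_sum_iff_of_le (fun j _ => hterm i j)).1 (h1 i (Finset.mem_univ _)) j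
        (Finset.mem_univ _)
    refine switch_balanced G _ (fun i => if 0 < x i then 1 else -1) fun i j hij => ?_
    have h3 := h2 i j
    rw [hL, hQ, sgLap_adj G _ hij, sgLap_adj G _ hij] at h3
    have hi : 0 < |x i| := hpos i
    have hj : 0 < |x j| := hpos j
    have hij' : 0 < |x i| * |x j| := mul_pos hi hj
    simp only [hy] at h3
    rcases Int.units_eq_one_or (σ s(i, j)) with h | h <;> rw [h] at h3 ⊢ <;> push_cast at h3 <;>
      split_ifs with ha hb hb <;> first | simp; done | skip
    · nlinarith [mul_pos ha hb]
    · nlinarith [mul_nonneg_of_nonpos_of_nonpos (not_lt.1 ha) (not_lt.1 hb)]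
    · nlinarith [mul_nonneg ha.le (neg_nonneg.2 (not_lt.1 hb))]
    · nlinarith [mul_nonneg (neg_nonneg.2 (not_lt.1 ha)) hb.le]
  · refine le_antisymm ?_ hge
    obtain ⟨s, hs⟩ := balanced_switch G _ hconn hab
    obtain ⟨z, hz0, hz⟩ := maxEig_exists Q hQh
    have hzz := dot_pos z hz0
    have hzQ : z ⬝ᵥ (Q.mulVec z) = maxEigenvalue Q * (z ⬝ᵥ z) := by
      rw [hz, dotProduct_smul, smul_eq_mul]
    have hsq : ∀ i, ((s i : ℤ) : ℝ) * ((s i : ℤ) : ℝ) = 1 := by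
      intro i
      rcases Int.units_eq_one_or (s i) with h | h <;> rw [h] <;> simp
    set t : V → ℝ := fun i => ((s i : ℤ) : ℝ) * z i with ht
    have htt : t ⬝ᵥ t = z ⬝ᵥ z := by
      simp only [dotProduct, ht]
      refine Finset.sum_congr rfl fun i _ => ?_
      linear_combination (z i * z i) * hsq i
    have htL : t ⬝ᵥ (L.mulVec t) = z ⬝ᵥ (Q.mulVec z) := by
      rw [form_eq, form_eq]
      refine Finset.sum_congr rfl fun i _ => Finset.sum_congr rfl fun j _ => ?_
      simp only [ht]
      by_cases hij : i = j
      · subst hij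
        rw [hL, hQ, sgLap_diag, sgLap_diag]
        linear_combination (z i * z i * (G.degree i : ℝ)) * hsq i
      by_cases h : G.Adj i j
      · have h4 := hs i j h
        have h5 : -((σ s(i, j) : ℤ) : ℝ) = ((s i : ℤ) : ℝ) * ((s j : ℤ) : ℝ) := by
          have := congrArg (fun u : ℤˣ => ((u : ℤ) : ℝ)) h4
          simpa using this
        rw [hL, hQ, sgLap_adj G _ h, sgLap_adj G _ h, h5]
        push_cast
        linear_combination (z i * z j * ((s j : ℤ) : ℝ) * ((s j : ℤ) : ℝ)) * hsq i
          + (z i * z j) * hsq j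
      · rw [hL, hQ, sgLap_non G _ hij h, sgLap_non G _ hij h]; simp
    have := maxEig_ge L hLh t
    rw [htL, hzQ, htt] at this
    exact le_of_mul_le_mul_right this hzz
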